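/- arXiv:2109.07656 — 3 statements merged into one kernel-verified Lean document; each statement's English description precedes it below -/
import Mathlib

section
/- Let δ ≥ k ≥ 3 and n ≥ F(k,δ). Then every graph G in the family A₂(n,k,δ) satisfies q(G) > 2(n−δ+k−3) − 1. -/
/-!
The bound follows from the Rayleigh quotient of `Q(G)` at the indicator vector of `Y ∪ Z`.
Put `m = |Y ∪ Z| = n - δ + k - 2`, so that the claim reads `q(G) > 2m - 3`. The quadratic form of
`Q(G)` at `x` is the sum of `(x u + x v) ^ 2` over the edges `uv`. At the indicator vector each of
the `m(m-1)/2 - |E'|` remaining edges inside `Y ∪ Z` contributes `4` and each of the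
`|X||Y| = (δ-k+2)(k-1)` edges between `X` and `Y` contributes `1`, so the form is at least
`2m(m-1) - 4|E'| + |X||Y|` (`quadForm_ge`), which is at least `2m(m-1) - 4` because
`4|E'| ≤ |X||Y| + 4`. By `dotProduct_qMatrix_le` the form is at most `q(G) m`; hence
`q(G) ≥ 2(m-1) - 4/m`, and this exceeds `2m - 3` once `m > 4`, which `n ≥ F(k,δ)` guarantees
(`lt_of_F_le`). A graph isomorphic to `A(n,k,δ) - E'` is handled by pulling the vector back along
the isomorphism (`sum_adj_comp_iso`).
-/

open Finset Matrix

attribute [local instance] Classical.propDecidable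

namespace QGraph

variable {V : Type*} [Fintype V] [DecidableEq V]

/-- The signless Laplacian matrix `Q(G) = D(G) + A(G)` of a simple graph. -/
noncomputable def qMatrix (G : SimpleGraph V) : Matrix V V ℝ :=
  Matrix.of fun i j =>
    (if i = j then (G.degree i : ℝ) else 0) + (if G.Adj i j then 1 else 0)

/-- The `Q`-index of `G`: the largest eigenvalue of `Q(G)`. -/
noncomputable def qIndex (G : SimpleGraph V) : ℝ :=
  sSup {μ : ℝ | ∃ x : V → ℝ, x ≠ 0 ∧ qMatrix G *ᵥ x = μ • x}

/-- `G` is `k`-connected: it has more than `k` vertices and removing fewer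
than `k` vertices leaves a connected graph. -/
def IsKConnected (G : SimpleGraph V) (k : ℕ) : Prop :=
  k < Fintype.card V ∧
    ∀ S : Finset V, S.card < k → (G.induce ((↑S : Set V)ᶜ)).Connected

/-- The graph `A(n,k,δ) = K_{k-1} ∨ (K_{δ-k+2} ∪ K_{n-δ-1})`. -/
def graphA (n k δ : ℕ) : SimpleGraph (Fin n) :=
  SimpleGraph.fromRel fun i j =>
    (i : ℕ) < k - 1 ∨ (j : ℕ) < k - 1 ∨
    (k - 1 ≤ (i : ℕ) ∧ (i : ℕ) < δ + 1 ∧ k - 1 ≤ (j : ℕ) ∧ (j : ℕ) < δ + 1) ∨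
    (δ + 1 ≤ (i : ℕ) ∧ δ + 1 ≤ (j : ℕ))

/-- `X`: the vertices of degree `δ` in `A(n,k,δ)`. -/
def inX (n k δ : ℕ) (v : Fin n) : Prop := k - 1 ≤ (v : ℕ) ∧ (v : ℕ) < δ + 1

/-- `Y`: the `k-1` join vertices (degree `n-1`) of `A(n,k,δ)`. -/
def inY (n k : ℕ) (v : Fin n) : Prop := (v : ℕ) < k - 1

/-- `Z`: the vertices of degree `n-δ+k-3` in `A(n,k,δ)`. -/
def inZ (n δ : ℕ) (v : Fin n) : Prop := δ + 1 ≤ (v : ℕ)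

noncomputable def F (k δ : ℕ) : ℝ :=
  ((k : ℝ) ^ 2 + 2 * k - 3) * (δ : ℝ) ^ 2
    - (2 * (k : ℝ) ^ 3 - (k : ℝ) ^ 2 - 17 * k + 8) * (δ : ℝ)
    + ((k : ℝ) ^ 4 - 3 * (k : ℝ) ^ 3 - 8 * (k : ℝ) ^ 2 + 23 * k + 4)

/-- `E'` is a set of edges of `A(n,k,δ)` with both endpoints in `Y ∪ Z`. -/
def EdgeConds (n k δ : ℕ) (E' : Finset (Sym2 (Fin n))) : Prop :=
  (↑E' : Set (Sym2 (Fin n))) ⊆ (graphA n k δ).edgeSet ∧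
    ∀ e ∈ E', ∀ v ∈ e, inY n k v ∨ inZ n δ v

/-- Membership (up to isomorphism) in the family `𝒜₁(n,k,δ)`. -/
def memA1 (n k δ : ℕ) (G : SimpleGraph (Fin n)) : Prop :=
  ∃ E' : Finset (Sym2 (Fin n)), EdgeConds n k δ E' ∧
    E'.card ≤ (δ - k + 2) * (k - 1) / 4 ∧
    Nonempty (G ≃g (graphA n k δ).deleteEdges (↑E' : Set (Sym2 (Fin n))))

/-- Conditions defining a concrete member of `𝒜₂(n,k,δ)`. -/
def A2Conds (n k δ : ℕ) (E' : Finset (Sym2 (Fin n))) : Prop :=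
  EdgeConds n k δ E' ∧ E'.card = (δ - k + 2) * (k - 1) / 4 + 1

/-- Membership (up to isomorphism) in the family `𝒜₂(n,k,δ)`. -/
def memA2 (n k δ : ℕ) (G : SimpleGraph (Fin n)) : Prop :=
  ∃ E' : Finset (Sym2 (Fin n)), A2Conds n k δ E' ∧
    Nonempty (G ≃g (graphA n k δ).deleteEdges (↑E' : Set (Sym2 (Fin n))))

/-- The number of edges of `G` with both endpoints satisfying `P`. -/
noncomputable def edgesWithin (G : SimpleGraph V) (P : V → Prop) : ℕ :=
  (G.edgeFinset.filter fun e => ∀ v ∈ e, P v).card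

/-- The Rayleigh bound for the `Q`-index: with `q` the supremum of the eigenvalues, the symmetric
matrix `q - Q(G)` has nonnegative eigenvalues, hence is positive semidefinite. -/
lemma dotProduct_qMatrix_le (G : SimpleGraph V) (x : V → ℝ) :
    x ⬝ᵥ (qMatrix G *ᵥ x) ≤ qIndex G * (x ⬝ᵥ x) := by
  have hbdd : BddAbove {μ : ℝ | ∃ x : V → ℝ, x ≠ 0 ∧ qMatrix G *ᵥ x = μ • x} := by
    refine ((Module.End.finite_hasEigenvalue (Matrix.toLin' (qMatrix G))).subset ?_).bddAbove
    rintro μ ⟨y, hy0, hy⟩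
    exact Module.End.hasEigenvalue_of_hasEigenvector (x := y)
      ⟨Module.End.mem_eigenspace_iff.mpr (by simpa using hy), hy0⟩
  have hherm : (qIndex G • (1 : Matrix V V ℝ) - qMatrix G).IsHermitian := by
    ext i j
    simp only [conjTranspose_apply, Matrix.sub_apply, Matrix.smul_apply, one_apply, qMatrix, of_apply,
      star_trivial, G.adj_comm j i, eq_comm (a := j) (b := i)]
    by_cases h : i = j
    · subst h; rfl
    · simp [h]
  have hpsd : (qIndex G • (1 : Matrix V V ℝ) - qMatrix G).PosSemidef := by
    rw [hherm.posSemidef_iff_eigenvalues_nonneg]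
    intro i
    have hv := hherm.mulVec_eigenvectorBasis i
    rw [sub_mulVec, smul_mulVec, one_mulVec] at hv
    have hmem : qIndex G - hherm.eigenvalues i ≤ qIndex G := by
      refine le_csSup hbdd ⟨⇑(hherm.eigenvectorBasis i), ?_, ?_⟩
      · intro h0
        apply hherm.eigenvectorBasis.orthonormal.ne_zero i
        ext j
        exact congrFun h0 j
      · rw [sub_smul, ← hv]
        abel
    simpa using hmem
  have h := hpsd.dotProduct_mulVec_nonneg x
  rw [star_trivial, sub_mulVec, smul_mulVec, one_mulVec, dotProduct_sub, dotProduct_smul,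
    smul_eq_mul] at h
  linarith

lemma dotProduct_qMatrix_eq (G : SimpleGraph V) (x : V → ℝ) :
    x ⬝ᵥ (qMatrix G *ᵥ x)
      = ∑ i, ∑ j, if G.Adj i j then x i * x i + x i * x j else 0 := by
  simp only [dotProduct, mulVec, qMatrix, of_apply]
  refine Finset.sum_congr rfl fun i _ => ?_
  have hdeg : (G.degree i : ℝ) = ∑ j, if G.Adj i j then (1 : ℝ) else 0 := by
    rw [← G.card_neighborFinset_eq_degree, G.neighborFinset_eq_filter]
    simp
  simp only [add_mul, Finset.sum_add_distrib, ite_mul, zero_mul, Finset.sum_ite_eq,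
    Finset.mem_univ, if_true, one_mul, mul_add]
  rw [hdeg, Finset.sum_mul, Finset.mul_sum, Finset.mul_sum, ← Finset.sum_add_distrib]
  refine Finset.sum_congr rfl fun j _ => ?_
  split_ifs <;> ring

lemma sum_adj_comp_iso {V : Type*} [Fintype V] {G H : SimpleGraph V} (φ : G ≃g H) (x : V → ℝ) :
    (∑ i, ∑ j, if G.Adj i j
        then (x ∘ φ) i * (x ∘ φ) i + (x ∘ φ) i * (x ∘ φ) j else 0)
      = ∑ i, ∑ j, if H.Adj i j then x i * x i + x i * x j else 0 := by
  rw [← φ.toEquiv.sum_comp fun i => ∑ j, if H.Adj i j then x i * x i + x i * x j else 0]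
  refine Finset.sum_congr rfl fun i _ => ?_
  rw [← φ.toEquiv.sum_comp fun j =>
    if H.Adj (φ.toEquiv i) j then x (φ.toEquiv i) * x (φ.toEquiv i) + x (φ.toEquiv i) * x j else 0]
  refine Finset.sum_congr rfl fun j _ => ?_
  exact if_congr φ.map_adj_iff.symm rfl rfl

/-- The ordered pairs of distinct vertices spanning a member of `E'` number at most `2 |E'|`
(the handshake lemma for the graph with edge set `E'`, loops discarded). -/
lemma sum_mem_le (E' : Finset (Sym2 V)) :
    (∑ i, ∑ j, if i ≠ j ∧ s(i, j) ∈ E' then (1 : ℝ) else 0) ≤ 2 * E'.card := by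
  obtain ⟨H, hH⟩ : ∃ H, H = SimpleGraph.fromEdgeSet (↑E' : Set (Sym2 V)) := ⟨_, rfl⟩
  have h1 : (∑ i, ∑ j, if i ≠ j ∧ s(i, j) ∈ E' then (1 : ℝ) else 0)
      = ((∑ i, H.degree i : ℕ) : ℝ) := by
    rw [Nat.cast_sum]
    refine Finset.sum_congr rfl fun i _ => ?_
    rw [← H.card_neighborFinset_eq_degree, H.neighborFinset_eq_filter, Finset.card_filter,
      Nat.cast_sum]
    refine Finset.sum_congr rfl fun j _ => ?_
    simp [hH, and_comm]
  rw [h1, H.sum_degrees_eq_twice_card_edges]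
  refine le_trans (b := ((2 * E'.card : ℕ) : ℝ)) (Nat.cast_le.mpr (Nat.mul_le_mul_left 2 ?_))
    (by push_cast; exact le_rfl)
  refine Finset.card_le_card fun e he => ?_
  rw [SimpleGraph.mem_edgeFinset, hH, SimpleGraph.edgeSet_fromEdgeSet] at he
  exact he.1

/-- The hypothesis `n ≥ F k δ` is used only through this crude consequence. -/
lemma lt_of_F_le (n k δ : ℕ) (hk : 3 ≤ k) (hδk : k ≤ δ) (hn : (n : ℝ) ≥ F k δ) :
    δ + 7 ≤ n := by
  obtain ⟨s, rfl⟩ := Nat.exists_eq_add_of_le hk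
  obtain ⟨t, rfl⟩ := Nat.exists_eq_add_of_le hδk
  have hs : (0 : ℝ) ≤ s := s.cast_nonneg
  have ht : (0 : ℝ) ≤ t := t.cast_nonneg
  unfold F at hn
  push_cast at hn
  have h : ((3 + s + t + 7 : ℕ) : ℝ) ≤ (n : ℝ) := by
    push_cast
    nlinarith [mul_nonneg hs ht, mul_nonneg hs hs, mul_nonneg ht ht,
      mul_nonneg hs (mul_nonneg ht ht), mul_nonneg (mul_nonneg hs hs) ht,
      mul_nonneg (mul_nonneg hs hs) (mul_nonneg ht ht)]
  exact_mod_cast h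

/-- The indicator vector of `Y ∪ Z`, the complement of `X`. -/
noncomputable def xVec (n k δ : ℕ) (i : Fin n) : ℝ :=
  if k - 1 ≤ (i : ℕ) ∧ (i : ℕ) < δ + 1 then 0 else 1

/-- The indicator vector of `Y`. -/
noncomputable def yVec (n k : ℕ) (i : Fin n) : ℝ :=
  if (i : ℕ) < k - 1 then 1 else 0

lemma sum_yVec (n k : ℕ) (hk : 3 ≤ k) (hn : k ≤ n + 1) : ∑ i, yVec n k i = (k : ℝ) - 1 := by
  have hc : (Finset.univ.filter fun i : Fin n => (i : ℕ) < k - 1).card = k - 1 := by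
    rw [Fin.card_filter_val_lt]; omega
  simp only [yVec, Finset.sum_boole, hc]
  rw [Nat.cast_sub (by omega), Nat.cast_one]

lemma sum_one_sub_xVec (n k δ : ℕ) (hk : 3 ≤ k) (hδk : k ≤ δ) (hn : δ + 1 ≤ n) :
    ∑ i, (1 - xVec n k δ i) = (δ : ℝ) - k + 2 := by
  have h1 : ∀ i : Fin n,
      1 - xVec n k δ i = (if (i : ℕ) < δ + 1 then (1 : ℝ) else 0) - yVec n k i := by
    intro i
    simp only [xVec, yVec]
    split_ifs <;> first | omega | norm_num
  have hc : (Finset.univ.filter fun i : Fin n => (i : ℕ) < δ + 1).card = δ + 1 := by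
    rw [Fin.card_filter_val_lt]; omega
  rw [Finset.sum_congr rfl fun i _ => h1 i, Finset.sum_sub_distrib, sum_yVec n k hk (by omega),
    Finset.sum_boole, hc]
  push_cast
  ring

lemma sum_xVec (n k δ : ℕ) (hk : 3 ≤ k) (hδk : k ≤ δ) (hn : δ + 1 ≤ n) :
    ∑ i, xVec n k δ i = (n : ℝ) - δ + k - 2 := by
  have h := sum_one_sub_xVec n k δ hk hδk hn
  rw [Finset.sum_sub_distrib] at h
  simp only [Finset.sum_const, Finset.card_univ, Fintype.card_fin, nsmul_eq_mul, mul_one] at h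
  linarith

/-- With `m = |Y ∪ Z| = n - δ + k - 2`, the indicator vector of `Y ∪ Z` has quadratic form at
least `2m(m-1) + |X||Y| - 4|E'|` for `Q(A(n,k,δ) - E')`. -/
lemma quadForm_ge (n k δ : ℕ) (hk : 3 ≤ k) (hδk : k ≤ δ) (hn : δ + 1 ≤ n)
    (E' : Finset (Sym2 (Fin n))) :
    2 * ((n : ℝ) - δ + k - 2) * ((n : ℝ) - δ + k - 3)
        + ((δ : ℝ) - k + 2) * ((k : ℝ) - 1) - 4 * E'.card
      ≤ ∑ i, ∑ j, if ((graphA n k δ).deleteEdges (↑E' : Set (Sym2 (Fin n)))).Adj i j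
          then xVec n k δ i * xVec n k δ i + xVec n k δ i * xVec n k δ j else 0 := by
  -- The pointwise count: an ordered pair of distinct elements of `Y ∪ Z` contributes 2, a pair in
  -- `Y × X` contributes 1, and each deleted ordered pair loses at most 2.
  have hpt : ∀ i j : Fin n,
      (2 * (xVec n k δ i * xVec n k δ j) - 2 * (if i = j then xVec n k δ i else 0)
          + yVec n k i * (1 - xVec n k δ j))
        - 2 * (if i ≠ j ∧ s(i, j) ∈ E' then (1 : ℝ) else 0)
      ≤ if ((graphA n k δ).deleteEdges (↑E' : Set (Sym2 (Fin n)))).Adj i j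
          then xVec n k δ i * xVec n k δ i + xVec n k δ i * xVec n k δ j else 0 := by
    intro i j
    have hij : i = j ↔ (i : ℕ) = (j : ℕ) := Fin.ext_iff
    simp only [SimpleGraph.deleteEdges_adj, graphA, SimpleGraph.fromRel_adj, Finset.mem_coe,
      xVec, yVec, ne_eq, hij]
    by_cases hE : s(i, j) ∈ E'
    · simp only [hE, not_true_eq_false, and_false, if_false, and_true]
      split_ifs <;> first | omega | norm_num
    · simp only [hE, not_false_eq_true, and_false, if_false, and_true]
      split_ifs <;> first | omega | norm_num
  refine le_trans ?_ (Finset.sum_le_sum fun i _ => Finset.sum_le_sum fun j _ => hpt i j)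
  have hE := sum_mem_le E'
  simp only [Finset.sum_sub_distrib, Finset.sum_add_distrib, ← Finset.mul_sum, ← Finset.sum_mul,
    Finset.sum_ite_eq, Finset.mem_univ, if_true] at hE ⊢
  rw [← Finset.sum_sub_distrib, sum_one_sub_xVec n k δ hk hδk hn, sum_xVec n k δ hk hδk hn,
    sum_yVec n k hk (by omega)]
  linarith

/-- Lemma 3.2. For `δ ≥ k ≥ 3` and `n ≥ F(k,δ)`, every graph in
`𝒜₂(n,k,δ)` satisfies `q(G) > 2(n-δ+k-3) - 1`. -/
theorem stmt7 (n k δ : ℕ) (hk : 3 ≤ k) (hδk : k ≤ δ) (hn : (n : ℝ) ≥ F k δ)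
    (G : SimpleGraph (Fin n)) (hG : memA2 n k δ G) :
    qIndex G > 2 * ((n : ℝ) - δ + k - 3) - 1 := by
  obtain ⟨E', ⟨-, hcard⟩, ⟨φ⟩⟩ := hG
  have hlt := lt_of_F_le n k δ hk hδk hn
  have hray := dotProduct_qMatrix_le G (xVec n k δ ∘ φ)
  have hxx : (xVec n k δ ∘ φ) ⬝ᵥ (xVec n k δ ∘ φ) = (n : ℝ) - δ + k - 2 := by
    rw [← sum_xVec n k δ hk hδk (by omega)]
    simp only [dotProduct, Function.comp_apply]
    refine (φ.toEquiv.sum_comp fun i => xVec n k δ i * xVec n k δ i).trans ?_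
    refine Finset.sum_congr rfl fun i _ => ?_
    simp only [xVec]
    split_ifs <;> norm_num
  have hquad := quadForm_ge n k δ hk hδk (by omega) E'
  have htransfer := (dotProduct_qMatrix_eq G (xVec n k δ ∘ φ)).trans
    (sum_adj_comp_iso φ (xVec n k δ))
  rw [hxx, htransfer] at hray
  have hE : 4 * (E'.card : ℝ) ≤ ((δ : ℝ) - k + 2) * ((k : ℝ) - 1) + 4 := by
    have h4 : 4 * E'.card ≤ (δ - k + 2) * (k - 1) + 4 := by omega
    have h5 : ((4 * E'.card : ℕ) : ℝ) ≤ (((δ - k + 2) * (k - 1) + 4 : ℕ) : ℝ) :=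
      Nat.cast_le.mpr h4
    push_cast [Nat.cast_sub hδk, Nat.cast_sub (show 1 ≤ k by omega)] at h5
    exact h5
  have hm : (4 : ℝ) < (n : ℝ) - δ + k - 2 := by
    have h1 : ((δ + 7 : ℕ) : ℝ) ≤ n := Nat.cast_le.mpr hlt
    have h2 : (3 : ℝ) ≤ k := by exact_mod_cast hk
    push_cast at h1
    linarith
  -- With `m = |Y ∪ Z|`, this is `q m ≥ 2m(m-1) - 4 > (2m-3) m`, as `m > 4`.
  by_contra! hcon
  have hle : 2 * ((n : ℝ) - δ + k - 2) * ((n : ℝ) - δ + k - 3)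
      + ((δ : ℝ) - k + 2) * ((k : ℝ) - 1) - 4 * E'.card
      ≤ qIndex G * ((n : ℝ) - δ + k - 2) := by
    refine hquad.trans (le_trans (le_of_eq ?_) hray)
    congr!
  have hup := mul_le_mul_of_nonneg_right hcon (by linarith : (0 : ℝ) ≤ (n : ℝ) - δ + k - 2)
  linarith

end QGraph
end

section
/- Let δ ≥ k ≥ 3 and n ≥ F(k,δ), and let G ∈ A₂(n,k,δ) be connected with q(G) > 2δ−k+1, and let x be the positive eigenvector of Q(G) corresponding to q(G), normalized so that max_{i∈V(G)} x_i = 1. Then for each vertex i ∈ X one has x_i ≤ (k−1)/(q(G) − (2δ−k+1)). -/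
/-!
Let `m` be a vertex of `X` at which the eigenvector `x` is largest on `X`. Every neighbour of `m`
lies in `Y` (at most `k - 1` vertices, each of weight at most `1`) or in `X \ {m}` (at most
`δ - k + 1` vertices, each of weight at most `x m`), and hence `deg m ≤ δ`. The eigenvalue equation
`q x_m = deg(m) x_m + ∑_{j ∼ m} x_j` therefore gives `q x_m ≤ δ x_m + (k - 1) + (δ - k + 1) x_m`,
which rearranges to the claimed bound for `x m`, and so for all of `X`. The neighbourhood of
`m` is controlled through `G ≤ A(n,k,δ)`, since deleting edges only shrinks it.
-/

open Finset Matrix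

attribute [local instance] Classical.propDecidable

namespace QGraph

variable {V : Type*} [Fintype V] [DecidableEq V]

/-- The row of `Q(G) x` at the vertex `m`, written as a sum over neighbours. -/
lemma qMatrix_mulVec_apply (G : SimpleGraph V) (x : V → ℝ) (m : V) :
    (qMatrix G *ᵥ x) m = (G.degree m : ℝ) * x m + ∑ j ∈ G.neighborFinset m, x j := by
  have h : G.neighborFinset m = univ.filter (fun j => G.Adj m j) := by
    ext j; simp
  rw [h, Finset.sum_filter]
  simp [qMatrix, Matrix.mulVec, dotProduct, add_mul, Finset.sum_add_distrib]

lemma card_filter_inY_le (n k : ℕ) : (univ.filter (inY n k)).card ≤ k - 1 := by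
  have h := Finset.card_le_card_of_injOn (s := univ.filter (inY n k)) (t := range (k - 1))
    (fun v => (v : ℕ)) (by intro v hv; simpa [inY] using hv)
    (fun a _ b _ hab => Fin.ext hab)
  simpa using h

lemma card_filter_inX_erase_le (n k δ : ℕ) (hk : 3 ≤ k) (hδk : k ≤ δ) (m : Fin n)
    (hm : inX n k δ m) : ((univ.filter (inX n k δ)).erase m).card ≤ δ + 1 - k := by
  have h := Finset.card_le_card_of_injOn (s := univ.filter (inX n k δ)) (t := Ico (k - 1) (δ + 1))
    (fun v => (v : ℕ)) (by intro v hv; simpa [inX] using hv)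
    (fun a _ b _ hab => Fin.ext hab)
  rw [Nat.card_Ico] at h
  rw [Finset.card_erase_of_mem (by simpa using hm)]
  omega

lemma neighborFinset_subset_of_inX (n k δ : ℕ) (G : SimpleGraph (Fin n))
    (hG : G ≤ graphA n k δ) (m : Fin n) (hm : inX n k δ m) :
    G.neighborFinset m ⊆ univ.filter (inY n k) ∪ (univ.filter (inX n k δ)).erase m := by
  intro j hj
  have hadj := hG ((SimpleGraph.mem_neighborFinset _ _ _).1 hj)
  simp only [graphA, SimpleGraph.fromRel_adj] at hadj
  obtain ⟨hne, hadj⟩ := hadj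
  simp only [mem_union, mem_filter, mem_univ, true_and, mem_erase, inX, inY] at hm ⊢
  have hne' : j ≠ m := fun h => hne h.symm
  by_cases hY : (j : ℕ) < k - 1
  · exact Or.inl hY
  · exact Or.inr ⟨hne', by omega, by omega⟩

/-- Lemma 3.3. For a connected member `G` of `𝒜₂(n,k,δ)` with
`q(G) > 2δ-k+1` and positive unit-normalized eigenvector `x` of `Q(G)`, every vertex
`i ∈ X` satisfies `x_i ≤ (k-1)/(q(G) - (2δ-k+1))`. -/
theorem stmt9 (n k δ : ℕ) (hk : 3 ≤ k) (hδk : k ≤ δ) (hn : (n : ℝ) ≥ F k δ)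
    (E' : Finset (Sym2 (Fin n))) (hE : A2Conds n k δ E')
    (G : SimpleGraph (Fin n))
    (hG : G = (graphA n k δ).deleteEdges (↑E' : Set (Sym2 (Fin n))))
    (hconn : G.Connected)
    (hq : qIndex G > 2 * (δ : ℝ) - (k : ℝ) + 1)
    (x : Fin n → ℝ) (hx : ∀ v, 0 < x v)
    (heig : qMatrix G *ᵥ x = qIndex G • x)
    (hle : ∀ v, x v ≤ 1) (hattain : ∃ v, x v = 1)
    (i : Fin n) (hi : inX n k δ i) :
    x i ≤ ((k : ℝ) - 1) / (qIndex G - (2 * (δ : ℝ) - (k : ℝ) + 1)) := by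
  -- `m` maximizes `x` on `X`
  obtain ⟨m, hmX, hmax⟩ := Finset.exists_max_image (univ.filter (inX n k δ)) x
    ⟨i, by simpa using hi⟩
  have hm : inX n k δ m := by simpa using hmX
  have him : x i ≤ x m := hmax i (by simpa using hi)
  have hle' : G ≤ graphA n k δ := hG ▸ SimpleGraph.deleteEdges_le _
  have hsub := neighborFinset_subset_of_inX n k δ G hle' m hm
  have hcY := card_filter_inY_le n k
  have hcX := card_filter_inX_erase_le n k δ hk hδk m hm
  have hdeg : G.degree m ≤ δ := by
    rw [← SimpleGraph.card_neighborFinset_eq_degree]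
    have := (Finset.card_le_card hsub).trans (Finset.card_union_le _ _)
    omega
  have hcY' : ((univ.filter (inY n k)).card : ℝ) ≤ k - 1 := by
    have : (univ.filter (inY n k)).card + 1 ≤ k := by omega
    have : (((univ.filter (inY n k)).card + 1 : ℕ) : ℝ) ≤ k := by exact_mod_cast this
    push_cast at this
    linarith
  have hcX' : (((univ.filter (inX n k δ)).erase m).card : ℝ) ≤ δ + 1 - k := by
    have : ((univ.filter (inX n k δ)).erase m).card + k ≤ δ + 1 := by omega
    have : ((((univ.filter (inX n k δ)).erase m).card + k : ℕ) : ℝ) ≤ (δ + 1 : ℕ) := by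
      exact_mod_cast this
    push_cast at this
    linarith
  have hsumY : ∑ j ∈ univ.filter (inY n k), x j ≤ k - 1 := by
    refine (Finset.sum_le_card_nsmul _ x 1 fun j _ => hle j).trans ?_
    simpa using hcY'
  have hsumX : ∑ j ∈ (univ.filter (inX n k δ)).erase m, x j ≤ (δ + 1 - k) * x m := by
    refine (Finset.sum_le_card_nsmul _ x (x m) fun j hj => hmax j (mem_of_mem_erase hj)).trans ?_
    rw [nsmul_eq_mul]
    exact mul_le_mul_of_nonneg_right hcX' (hx m).le
  have hdisj : Disjoint (univ.filter (inY n k)) ((univ.filter (inX n k δ)).erase m) := by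
    rw [Finset.disjoint_left]
    intro j hjY hjX
    simp only [mem_filter, mem_univ, true_and, mem_erase, inX, inY] at hjY hjX
    omega
  have hsum : ∑ j ∈ G.neighborFinset m, x j ≤ (k - 1) + (δ + 1 - k) * x m := by
    refine (Finset.sum_le_sum_of_subset_of_nonneg hsub fun j _ _ => (hx j).le).trans ?_
    rw [Finset.sum_union hdisj]
    exact add_le_add hsumY hsumX
  have heq := congrFun heig m
  rw [qMatrix_mulVec_apply, Pi.smul_apply, smul_eq_mul] at heq
  have hdeg' : (G.degree m : ℝ) * x m ≤ δ * x m :=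
    mul_le_mul_of_nonneg_right (by exact_mod_cast hdeg) (hx m).le
  refine him.trans ?_
  rw [le_div_iff₀ (by linarith)]
  linarith

end QGraph
end

section
/- Let δ ≥ k ≥ 3 and n ≥ F(k,δ). Let G be a connected graph in A₂(n,k,δ) with the largest Q-index among all graphs in A₂(n,k,δ) and, subject to that, such that the induced subgraph G[Y] has the largest number of edges; let x be the positive eigenvector of Q(G) corresponding to q(G) normalized so that max_{i∈V(G)} x_i = 1. If Y₂ ≠ ∅, then x_i > x_j for all i ∈ Z₁ and all j ∈ Y₂. -/
/-!
The proof is a switching argument. Suppose `x i ≤ x j` with `i ∈ Z₁` and `j ∈ Y₂`. Since `j` is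
joined to everything in `A(n,k,δ)` but has degree at most `n - 2` in `G`, some deleted edge `jw`
is incident to `j`; since `i` has full degree, no deleted edge is incident to `i`, so `iw` is an
edge of `G`. Deleting `iw` instead of `jw` gives another member `G'` of the family, and

  `xᵀ Q(G') x - xᵀ Q(G) x = (x j + x w)² - (x i + x w)² ≥ 0`.

As `q(G') ≤ q(G)` by maximality, `x` attains the maximum of the Rayleigh quotient of `Q(G')`, so it
is an eigenvector of `Q(G')` for `q(G')` (`qMatrix_mulVec_eq_of_le`). But row `j` of `Q(G') x`
exceeds row `j` of `Q(G) x` by `x j + x w > 0`, which contradicts `q(G') ≤ q(G)`.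
-/

open Finset Matrix

attribute [local instance] Classical.propDecidable

namespace QGraph

variable {V : Type*} [Fintype V] [DecidableEq V]

lemma qMatrix_mulVec_apply_s10 (G : SimpleGraph V) (x : V → ℝ) (v : V) :
    (qMatrix G *ᵥ x) v = ∑ w, if G.Adj v w then x v + x w else 0 := by
  have hdeg : (G.degree v : ℝ) = ∑ w, if G.Adj v w then (1 : ℝ) else 0 := by
    rw [← G.card_neighborFinset_eq_degree, G.neighborFinset_eq_filter]
    simp
  have h1 : (qMatrix G *ᵥ x) v
      = (G.degree v : ℝ) * x v + ∑ w, if G.Adj v w then x w else 0 := by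
    simp [qMatrix, Matrix.mulVec, dotProduct, add_mul, Finset.sum_add_distrib]
  rw [h1, hdeg, Finset.sum_mul, ← Finset.sum_add_distrib]
  refine Finset.sum_congr rfl fun w _ => ?_
  split_ifs <;> simp

/-- Adding one edge `ab` to `H` changes `Q(H) x` by `(x a + x b) (e_a + e_b)`. -/
lemma qMatrix_mulVec_add_edge (G H : SimpleGraph V) (a b : V) (hab : a ≠ b)
    (hH : ¬ H.Adj a b) (hGH : ∀ u v, G.Adj u v ↔ H.Adj u v ∨ s(u, v) = s(a, b))
    (x : V → ℝ) :
    qMatrix G *ᵥ x = qMatrix H *ᵥ x + (x a + x b) • (Pi.single a 1 + Pi.single b 1) := by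
  funext v
  have hH' : ¬ H.Adj b a := fun h => hH h.symm
  have key : ∀ w, (if G.Adj v w then x v + x w else 0)
      = (if H.Adj v w then x v + x w else 0)
        + ((if w = b then (if v = a then x a + x b else 0) else 0)
          + (if w = a then (if v = b then x a + x b else 0) else 0)) := by
    intro w
    rw [if_congr (hGH v w) rfl rfl]
    simp only [Sym2.eq_iff]
    by_cases h1 : v = a
    · subst h1
      by_cases h2 : w = b
      · subst h2
        simp [hH, hab]
      · simp [h2, hab]
    · by_cases h3 : v = b
      · subst h3
        by_cases h2 : w = a
        · subst h2
          simp [hH', h1, add_comm]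
        · simp [h2, h1]
      · simp [h1, h3]
  rw [Pi.add_apply, qMatrix_mulVec_apply_s10, qMatrix_mulVec_apply_s10,
    Finset.sum_congr rfl fun w _ => key w, Finset.sum_add_distrib, Finset.sum_add_distrib]
  simp [Pi.single_apply, mul_add]

lemma qMatrix_isHermitian (G : SimpleGraph V) : (qMatrix G).IsHermitian := by
  ext u v
  simp only [qMatrix, Matrix.conjTranspose_apply, Matrix.of_apply, star_trivial]
  by_cases h : u = v
  · subst h; rfl
  · simp [h, Ne.symm h, G.adj_comm u v]

lemma le_qIndex (G : SimpleGraph V) {μ : ℝ} {x : V → ℝ} (hx : x ≠ 0)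
    (h : qMatrix G *ᵥ x = μ • x) : μ ≤ qIndex G := by
  refine le_csSup ?_ ⟨x, hx, h⟩
  refine ((Module.End.finite_hasEigenvalue (Matrix.toLin' (qMatrix G))).subset ?_).bddAbove
  rintro ν ⟨y, hy, hν⟩
  exact Module.End.hasEigenvalue_of_hasEigenvector
    (x := y) ⟨Module.End.mem_eigenspace_iff.2 (by simpa using hν), hy⟩

lemma qIndex_sub_posSemidef (G : SimpleGraph V) :
    (qIndex G • (1 : Matrix V V ℝ) - qMatrix G).PosSemidef := by
  have hM : (qIndex G • (1 : Matrix V V ℝ) - qMatrix G).IsHermitian := by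
    refine Matrix.IsHermitian.sub ?_ (qMatrix_isHermitian G)
    simp [Matrix.IsHermitian]
  refine hM.posSemidef_iff_eigenvalues_nonneg.2 fun t => ?_
  have ht := hM.mulVec_eigenvectorBasis t
  set y : V → ℝ := ⇑(hM.eigenvectorBasis t) with hy
  have hy0 : y ≠ 0 := by
    intro h0
    apply hM.eigenvectorBasis.orthonormal.ne_zero t
    ext v
    exact congrFun h0 v
  have hle : qIndex G - hM.eigenvalues t ≤ qIndex G := by
    refine le_qIndex G hy0 ?_
    rw [Matrix.sub_mulVec, Matrix.smul_mulVec, Matrix.one_mulVec] at ht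
    rw [sub_smul, ← ht]
    abel
  simpa using hle

/-- A vector whose Rayleigh quotient reaches the `Q`-index is an eigenvector for it. -/
lemma qMatrix_mulVec_eq_of_le (G : SimpleGraph V) (x : V → ℝ)
    (h : qIndex G * (x ⬝ᵥ x) ≤ x ⬝ᵥ (qMatrix G *ᵥ x)) :
    qMatrix G *ᵥ x = qIndex G • x := by
  have hpsd := qIndex_sub_posSemidef G
  have hval : x ⬝ᵥ ((qIndex G • (1 : Matrix V V ℝ) - qMatrix G) *ᵥ x)
      = qIndex G * (x ⬝ᵥ x) - x ⬝ᵥ (qMatrix G *ᵥ x) := by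
    rw [Matrix.sub_mulVec, Matrix.smul_mulVec, Matrix.one_mulVec, dotProduct_sub,
      dotProduct_smul, smul_eq_mul]
  have hnonneg := hpsd.dotProduct_mulVec_nonneg x
  have hzero := (hpsd.dotProduct_mulVec_zero_iff x).1 (by
    rw [star_trivial] at hnonneg ⊢
    linarith)
  rw [Matrix.sub_mulVec, Matrix.smul_mulVec, Matrix.one_mulVec, sub_eq_zero] at hzero
  exact hzero.symm

lemma graphA_adj_of_inY {n k δ : ℕ} {u v : Fin n} (huv : u ≠ v) (hu : inY n k u) :
    (graphA n k δ).Adj u v := by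
  rw [graphA, SimpleGraph.fromRel_adj]
  exact ⟨huv, Or.inl (Or.inl hu)⟩

lemma graphA_adj_of_inZ {n k δ : ℕ} {u v : Fin n} (huv : u ≠ v) (hu : inZ n δ u)
    (hv : inY n k v ∨ inZ n δ v) : (graphA n k δ).Adj u v := by
  rw [graphA, SimpleGraph.fromRel_adj]
  rcases hv with hv | hv
  · exact ⟨huv, Or.inl (Or.inr (Or.inl hv))⟩
  · exact ⟨huv, Or.inl (Or.inr (Or.inr (Or.inr ⟨hu, hv⟩)))⟩

lemma not_graphA_adj_of_inZ_of_inX {n k δ : ℕ} {u v : Fin n} (hu : inZ n δ u)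
    (hv : inX n k δ v) : ¬ (graphA n k δ).Adj u v := by
  rw [graphA, SimpleGraph.fromRel_adj]
  unfold inZ at hu
  unfold inX at hv
  omega

lemma card_inX {n k δ : ℕ} (hk : k ≤ δ) (hk3 : 3 ≤ k) (hn : δ + 2 ≤ n) :
    (Finset.univ.filter fun v : Fin n => inX n k δ v).card = δ - k + 2 := by
  have himg : (Finset.univ.filter fun v : Fin n => inX n k δ v).map Fin.valEmbedding
      = Finset.Ico (k - 1) (δ + 1) := by
    ext a
    simp only [Finset.mem_map, Finset.mem_filter, Finset.mem_univ, true_and,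
      Fin.valEmbedding_apply, Finset.mem_Ico]
    constructor
    · rintro ⟨v, hv, rfl⟩
      exact hv
    · intro ha
      exact ⟨⟨a, by omega⟩, ha, rfl⟩
  rw [← Finset.card_map Fin.valEmbedding, himg, Nat.card_Ico]
  omega

/-- A vertex of `Z₁` stays adjacent to every other vertex of `Y ∪ Z`. -/
lemma adj_of_full_degree {n k δ : ℕ} (hk3 : 3 ≤ k) (hk : k ≤ δ) {G : SimpleGraph (Fin n)}
    (hG : G ≤ graphA n k δ) {i w : Fin n} (hi : inZ n δ i)
    (hdeg : G.degree i = n - δ + k - 3) (hw : inY n k w ∨ inZ n δ w) (hiw : i ≠ w) :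
    G.Adj i w := by
  by_contra hna
  have hin : δ + 2 ≤ n := by
    have := i.isLt
    unfold inZ at hi
    omega
  have hnotX : ∀ v : Fin n, inY n k v ∨ inZ n δ v → ¬ inX n k δ v := by
    intro v hv
    unfold inY inZ at hv
    unfold inX
    omega
  -- `G` has no edge from `i` to the `δ - k + 2` vertices of `X`, to `i`, or to `w`.
  have hsub : G.neighborFinset i
      ⊆ (insert i (insert w (Finset.univ.filter fun v : Fin n => inX n k δ v)))ᶜ := by
    intro v hv
    rw [SimpleGraph.mem_neighborFinset] at hv
    simp only [Finset.mem_compl, Finset.mem_insert, Finset.mem_filter, Finset.mem_univ, true_and]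
    rintro (rfl | rfl | h)
    · exact G.irrefl hv
    · exact hna hv
    · exact not_graphA_adj_of_inZ_of_inX hi h (hG hv)
  have hcard := Finset.card_le_card hsub
  rw [Finset.card_compl, Finset.card_insert_of_notMem, Finset.card_insert_of_notMem,
    card_inX hk hk3 hin, SimpleGraph.card_neighborFinset_eq_degree, hdeg, Fintype.card_fin] at hcard
  · omega
  · simpa using hnotX w hw
  · simpa [hiw] using hnotX i (Or.inr hi)

/-- Lemma 3.4. Let `G` be the connected member of `𝒜₂(n,k,δ)` with the
largest `Q`-index and, subject to that, with `G[Y]` having the most edges, and let `x` be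
the positive normalized eigenvector of `Q(G)`. If `Y₂ ≠ ∅` then `x_i > x_j` for all
`i ∈ Z₁` and `j ∈ Y₂`. -/
theorem stmt10 (n k δ : ℕ) (hk : 3 ≤ k) (hδk : k ≤ δ) (hn : (n : ℝ) ≥ F k δ)
    (E' : Finset (Sym2 (Fin n))) (hE : A2Conds n k δ E')
    (G : SimpleGraph (Fin n))
    (hG : G = (graphA n k δ).deleteEdges (↑E' : Set (Sym2 (Fin n))))
    (hconn : G.Connected)
    (hmax : ∀ E'' : Finset (Sym2 (Fin n)), A2Conds n k δ E'' →
      qIndex ((graphA n k δ).deleteEdges (↑E'' : Set (Sym2 (Fin n)))) ≤ qIndex G)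
    (hedges : ∀ E'' : Finset (Sym2 (Fin n)), A2Conds n k δ E'' →
      qIndex ((graphA n k δ).deleteEdges (↑E'' : Set (Sym2 (Fin n)))) = qIndex G →
      edgesWithin ((graphA n k δ).deleteEdges (↑E'' : Set (Sym2 (Fin n)))) (inY n k) ≤
        edgesWithin G (inY n k))
    (x : Fin n → ℝ) (hx : ∀ v, 0 < x v)
    (heig : qMatrix G *ᵥ x = qIndex G • x)
    (hle : ∀ v, x v ≤ 1) (hattain : ∃ v, x v = 1)
    (hY2 : ∃ v, inY n k v ∧ G.degree v ≤ n - 2)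
    (i j : Fin n)
    (hi : inZ n δ i ∧ G.degree i = n - δ + k - 3)
    (hj : inY n k j ∧ G.degree j ≤ n - 2) :
    x i > x j := by
  by_contra hcon
  have hij : x i ≤ x j := not_lt.1 hcon
  obtain ⟨⟨hEsub, hEYZ⟩, hEcard⟩ := hE
  have hGle : G ≤ graphA n k δ := hG ▸ SimpleGraph.deleteEdges_le _
  have hGadj : ∀ u v, G.Adj u v ↔ (graphA n k δ).Adj u v ∧ s(u, v) ∉ E' := by
    intro u v
    rw [hG, SimpleGraph.deleteEdges_adj, Finset.mem_coe]
  obtain ⟨w, hjw, hnadj⟩ : ∃ w, j ≠ w ∧ ¬ G.Adj j w := by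
    by_contra! hall
    have hsub : Finset.univ.erase j ⊆ G.neighborFinset j := by
      intro v hv
      rw [SimpleGraph.mem_neighborFinset]
      exact hall v (Finset.ne_of_mem_erase hv).symm
    have hcard := Finset.card_le_card hsub
    rw [Finset.card_erase_of_mem (Finset.mem_univ j), Finset.card_univ, Fintype.card_fin,
      SimpleGraph.card_neighborFinset_eq_degree] at hcard
    have hi1 := i.isLt
    have hi2 : δ + 1 ≤ (i : ℕ) := hi.1
    omega
  have hjwE : s(j, w) ∈ E' := by
    by_contra h
    exact hnadj ((hGadj j w).2 ⟨graphA_adj_of_inY hjw hj.1, h⟩)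
  have hwYZ := hEYZ _ hjwE w (Sym2.mem_mk_right j w)
  have hfull : ∀ v, inY n k v ∨ inZ n δ v → i ≠ v → G.Adj i v := fun v hv hiv =>
    adj_of_full_degree hk hδk hGle hi.1 hi.2 hv hiv
  have hij' : i ≠ j := by
    rintro rfl
    have h1 : δ + 1 ≤ (i : ℕ) := hi.1
    have h2 : (i : ℕ) < k - 1 := hj.1
    omega
  have hiw : i ≠ w := by
    rintro rfl
    exact hnadj (hfull j (Or.inl hj.1) hij').symm
  have hiwG := hfull w hwYZ hiw
  have hiwA := hGle hiwG
  have hjwA : (graphA n k δ).Adj j w := hEsub hjwE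
  have hiwE : s(i, w) ∉ E' := ((hGadj i w).1 hiwG).2
  have hne : s(i, w) ≠ s(j, w) := fun h => hiwE (h ▸ hjwE)
  -- The switched graph `G'` deletes `iw` instead of `jw`; `H` deletes both.
  set E'' := insert s(i, w) (E'.erase s(j, w)) with hE''
  set G' := (graphA n k δ).deleteEdges (↑E'' : Set (Sym2 (Fin n))) with hG'
  set H := (graphA n k δ).deleteEdges (↑(insert s(i, w) E') : Set (Sym2 (Fin n))) with hH
  have hcondE'' : A2Conds n k δ E'' := by
    refine ⟨⟨?_, ?_⟩, ?_⟩
    · intro e he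
      rcases Finset.mem_insert.1 (Finset.mem_coe.1 he) with rfl | h
      · exact hiwA
      · exact hEsub (Finset.mem_of_mem_erase h)
    · intro e he v hv
      rcases Finset.mem_insert.1 he with rfl | h
      · rcases Sym2.mem_iff.1 hv with rfl | rfl
        · exact Or.inr hi.1
        · exact hwYZ
      · exact hEYZ e (Finset.mem_of_mem_erase h) v hv
    · rw [hE'', Finset.card_insert_of_notMem (fun h => hiwE (Finset.mem_of_mem_erase h)),
        Finset.card_erase_add_one hjwE, hEcard]
  have hHadj : ∀ u v, H.Adj u v ↔
      (graphA n k δ).Adj u v ∧ s(u, v) ≠ s(i, w) ∧ s(u, v) ∉ E' := by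
    intro u v
    rw [hH, SimpleGraph.deleteEdges_adj, Finset.mem_coe, Finset.mem_insert, not_or]
  have hG'adj : ∀ u v, G'.Adj u v ↔
      (graphA n k δ).Adj u v ∧ s(u, v) ≠ s(i, w) ∧ (s(u, v) = s(j, w) ∨ s(u, v) ∉ E') := by
    intro u v
    rw [hG', SimpleGraph.deleteEdges_adj, Finset.mem_coe, hE'', Finset.mem_insert, not_or,
      Finset.mem_erase, not_and_or, not_not]
  have hAiff : ∀ {u v a b : Fin n}, s(u, v) = s(a, b) → (graphA n k δ).Adj a b →
      (graphA n k δ).Adj u v := by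
    intro u v a b h hab
    rw [← SimpleGraph.mem_edgeSet, h]
    exact hab
  have hQG : qMatrix G *ᵥ x
      = qMatrix H *ᵥ x + (x i + x w) • (Pi.single i 1 + Pi.single w 1) := by
    refine qMatrix_mulVec_add_edge G H i w hiw (fun h => ((hHadj i w).1 h).2.1 rfl) ?_ x
    intro u v
    rw [hGadj, hHadj]
    constructor
    · rintro ⟨h1, h2⟩
      by_cases h : s(u, v) = s(i, w)
      · exact Or.inr h
      · exact Or.inl ⟨h1, h, h2⟩
    · rintro (⟨h1, -, h2⟩ | h)
      · exact ⟨h1, h2⟩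
      · exact ⟨hAiff h hiwA, h ▸ hiwE⟩
  have hQG' : qMatrix G' *ᵥ x
      = qMatrix H *ᵥ x + (x j + x w) • (Pi.single j 1 + Pi.single w 1) := by
    refine qMatrix_mulVec_add_edge G' H j w hjw (fun h => ((hHadj j w).1 h).2.2 hjwE) ?_ x
    intro u v
    rw [hG'adj, hHadj]
    constructor
    · rintro ⟨h1, h2, h | h⟩
      · exact Or.inr h
      · exact Or.inl ⟨h1, h2, h⟩
    · rintro (⟨h1, h2, h3⟩ | h)
      · exact ⟨h1, h2, Or.inr h3⟩
      · exact ⟨hAiff h hjwA, fun h' => hne (h'.symm.trans h), Or.inl h⟩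
  have hqle : qIndex G' ≤ qIndex G := hmax E'' hcondE''
  have hquadG : x ⬝ᵥ (qMatrix H *ᵥ x) + (x i + x w) ^ 2 = qIndex G * (x ⬝ᵥ x) := by
    have h := congrArg (fun y => x ⬝ᵥ y) (hQG.symm.trans heig)
    simp only [dotProduct_add, dotProduct_smul, dotProduct_single, smul_eq_mul, mul_one] at h
    rw [← h]
    ring
  have hquadG' : x ⬝ᵥ (qMatrix G' *ᵥ x) = x ⬝ᵥ (qMatrix H *ᵥ x) + (x j + x w) ^ 2 := by
    rw [hQG']
    simp only [dotProduct_add, dotProduct_smul, dotProduct_single, smul_eq_mul, mul_one]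
    ring
  have hxx : 0 ≤ x ⬝ᵥ x := Finset.sum_nonneg fun v _ => mul_self_nonneg (x v)
  have hsq : (x i + x w) ^ 2 ≤ (x j + x w) ^ 2 :=
    pow_le_pow_left₀ (add_pos (hx i) (hx w)).le (by linarith) 2
  have heig' : qMatrix G' *ᵥ x = qIndex G' • x := by
    refine qMatrix_mulVec_eq_of_le G' x ?_
    have := mul_le_mul_of_nonneg_right hqle hxx
    linarith
  -- Row `j` gains the edge `jw` and loses nothing.
  have hrowG := congrFun (hQG.symm.trans heig) j
  have hrowG' := congrFun (hQG'.symm.trans heig') j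
  simp only [Pi.add_apply, Pi.smul_apply, Pi.single_eq_same, Pi.single_eq_of_ne hij'.symm,
    Pi.single_eq_of_ne hjw, smul_eq_mul] at hrowG hrowG'
  have := mul_le_mul_of_nonneg_right hqle (hx j).le
  have := hx j
  have := hx w
  linarith

end QGraph
end
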